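/- Let K be a finite field of characteristic p and order q with [K : F_p] divisible by 4, and let d be an integer with gcd(d, q − 1) = 1. Then the set {W_{K,d}(a) : a ∈ K^×} is not equal to {0, p·sqrt(q), −p·sqrt(q)}. -/

import Mathlib

/-!
The Weil sums make sense over any ring containing a primitive `p`-th root of unity, in particular
over a valuation ring `V` of `ℂ` above `p`. There they are expanded in Gauss sums of powers of the
Teichmüller character, whose valuations are given by digit sums (Stickelberger). If all the Weil
sums of `x ^ d + a * x` over a field of order `p ^ (4 * m)` lie in `{0, ±p ^ (2 * m + 1)}`, then
comparing valuations (McEliece) gives `s (d * j) < s j + 2 * m * (p - 1)` for the base `p` digit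
sums of all nonzero residues `j` modulo `p ^ (4 * m) - 1`. Moreover `d` is congruent to `1` modulo
`p - 1` since the sums are rational integers. An analysis of four-digit expansions then forces `d`
to be congruent to a power of `p` modulo `p ^ 4 - 1`.

Such a `d` acts on the subfield of order `p ^ 4` as a power of Frobenius, so that every element `u`
of this subfield solves `1 + u ^ d + (-1 - u) ^ d = 0`. On the other hand, the values `0` and
`±p ^ (2 * m + 1)` determine the third power moment of the Weil sums, and hence give exactly `p ^ 2`
solutions `u` in the whole field.
-/

open scoped BigOperators Classical

/-- The canonical additive character of a finite field `K` of characteristic `p`: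
`ψ_K(x) = exp(2πi · Tr_{K/F_p}(x) / p)`, where `Tr_{K/F_p}` is the absolute trace. -/
noncomputable def canonicalAddChar (p : ℕ) [Fact p.Prime] (K : Type) [Field K] [Fintype K]
    [Algebra (ZMod p) K] (x : K) : ℂ :=
  Complex.exp (2 * Real.pi * Complex.I * ((Algebra.trace (ZMod p) K x).val : ℂ) / (p : ℂ))

/-- The Weil sum `W_{K,d}(a) = ∑_{x ∈ K} ψ_K(x^d + a·x)`. -/
noncomputable def weilSum (p : ℕ) [Fact p.Prime] (K : Type) [Field K] [Fintype K]
    [Algebra (ZMod p) K] (d : ℤ) (a : K) : ℂ :=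
  ∑ x : K, canonicalAddChar p K (x ^ d + a * x)

/-- The value set `{W_{K,d}(a) : a ∈ K^×}` of the Weil sum. -/
noncomputable def weilValues (p : ℕ) [Fact p.Prime] (K : Type) [Field K] [Fintype K]
    [Algebra (ZMod p) K] (d : ℤ) : Set ℂ :=
  {w : ℂ | ∃ a : K, a ≠ 0 ∧ weilSum p K d a = w}

/-- `d` is degenerate over a finite field of order `q` and characteristic `p` if
`d ≡ p^j (mod q − 1)` for some nonnegative integer `j`. -/
def IsDegenerate (p : ℕ) (q : ℕ) (d : ℤ) : Prop :=
  ∃ j : ℕ, d ≡ (p : ℤ) ^ j [ZMOD (q : ℤ) - 1]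

section DigitSum

/-- The sum of the base-`b` digits of `n`, the exponent in Stickelberger's theorem. -/
def digitSum (b n : ℕ) : ℕ := (b.digits n).sum

variable {b : ℕ}

lemma digitSum_zero : digitSum b 0 = 0 := by simp [digitSum]

lemma digitSum_eq_zero_iff {n : ℕ} : digitSum b n = 0 ↔ n = 0 := by
  refine ⟨fun h => by_contra fun hn => Nat.getLast_digit_ne_zero b hn ?_, ?_⟩
  · exact List.sum_eq_zero_iff.1 h _ (List.getLast_mem _)
  · rintro rfl
    exact digitSum_zero

lemma digitSum_modEq (hb : 1 < b) (n : ℕ) : digitSum b n ≡ n [MOD b - 1] := by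
  obtain rfl | h2 := eq_or_ne b 2
  · exact Nat.modEq_one
  · exact (Nat.modEq_digits_sum (b - 1) b
      (by rw [Nat.mod_eq_sub_mod (by omega), Nat.sub_sub_self hb.le, Nat.mod_eq_of_lt (by omega)])
      n).symm

lemma digitSum_add_base_mul (hb : 1 < b) {a : ℕ} (ha : a < b) (n : ℕ) :
    digitSum b (a + b * n) = a + digitSum b n := by
  rcases Nat.eq_zero_or_pos (a + n) with h | h
  · obtain ⟨rfl, rfl⟩ : a = 0 ∧ n = 0 := by omega
    simp [digitSum]
  · rw [digitSum, Nat.digits_add b hb a n ha (by omega), List.sum_cons, digitSum]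

lemma digitSum_of_lt (hb : 1 < b) {a : ℕ} (ha : a < b) : digitSum b a = a := by
  simpa [digitSum_zero] using digitSum_add_base_mul hb ha 0

lemma digitSum_base_mul (hb : 1 < b) (n : ℕ) : digitSum b (b * n) = digitSum b n := by
  simpa using digitSum_add_base_mul hb (by omega : 0 < b) n

lemma digitSum_add_pow_mul (hb : 1 < b) {a r : ℕ} (ha : a < b ^ r) (n : ℕ) :
    digitSum b (a + b ^ r * n) = digitSum b a + digitSum b n := by
  induction r generalizing a with
  | zero => simp_all [digitSum_zero]
  | succ r ih =>
    have hlt : a / b < b ^ r := Nat.div_lt_of_lt_mul (by rwa [← pow_succ'])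
    have hmod : a % b < b := Nat.mod_lt _ (by omega)
    have hsplit : a + b ^ (r + 1) * n = a % b + b * (a / b + b ^ r * n) := by
      conv_lhs => rw [← Nat.mod_add_div a b]
      ring
    conv_rhs => rw [← Nat.mod_add_div a b]
    rw [hsplit, digitSum_add_base_mul hb hmod, ih hlt, digitSum_add_base_mul hb hmod, add_assoc]

lemma digitSum_mul_geom_sum (hb : 1 < b) {a r : ℕ} (ha : a < b ^ r) (m : ℕ) :
    digitSum b (a * ∑ i ∈ Finset.range m, (b ^ r) ^ i) = m * digitSum b a := by
  induction m with
  | zero => simp [digitSum_zero]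
  | succ m ih =>
    rw [geom_sum_succ, mul_add, mul_one, mul_left_comm, add_comm, digitSum_add_pow_mul hb ha, ih]
    ring

lemma digitSum_succ_of_not_dvd (hb : 1 < b) {n : ℕ} (h : ¬ b ∣ n + 1) :
    digitSum b (n + 1) = digitSum b n + 1 := by
  have hmod : n % b + 1 < b := by
    have hlt := Nat.mod_lt n (by omega : b > 0)
    refine lt_of_le_of_ne hlt fun heq => h ⟨n / b + 1, ?_⟩
    have := Nat.mod_add_div n b
    rw [mul_add]; omega
  rw [← Nat.mod_add_div n b, add_right_comm, digitSum_add_base_mul hb hmod,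
    digitSum_add_base_mul hb (by omega)]
  ring

lemma exists_eq_pow_of_digitSum_eq_one (hb : 1 < b) {n : ℕ} (h : digitSum b n = 1) :
    ∃ k, n = b ^ k := by
  induction n using Nat.strong_induction_on with
  | _ n ih =>
    have hn : n ≠ 0 := by rintro rfl; simp [digitSum_zero] at h
    have hsum : n % b + digitSum b (n / b) = 1 := by
      rw [← digitSum_add_base_mul hb (Nat.mod_lt _ (by omega)), Nat.mod_add_div, h]
    have hdiv := Nat.mod_add_div n b
    rcases Nat.eq_zero_or_pos (n % b) with h0 | h0
    · obtain ⟨k, hk⟩ := ih (n / b) (Nat.div_lt_self (by omega) hb) (by omega)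
      exact ⟨k + 1, by rw [pow_succ', ← hk]; omega⟩
    · have hq : n / b = 0 := (digitSum_eq_zero_iff (b := b)).1 (by omega)
      exact ⟨0, by rw [hq] at hdiv; simp only [pow_zero]; omega⟩

end DigitSum

section Degeneracy

variable {b : ℕ}

lemma eq_one_or_eq_of_modEq_one {n : ℕ} (hn : n ≠ 0) (hlt : n < 1 + 2 * (b - 1))
    (h : n ≡ 1 [MOD b - 1]) : n = 1 ∨ n = b := by
  obtain ⟨k, hk⟩ := (Nat.modEq_iff_dvd' (by omega)).1 h.symm
  have hk2 : k < 2 := by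
    by_contra! hk2
    have := Nat.mul_le_mul_left (b - 1) hk2
    omega
  interval_cases k <;> omega

lemma digitSum_mod_eq_one_or_eq (hb : 1 < b) {d N : ℕ} (hN : b - 1 ∣ N) (hd : d ≡ 1 [MOD b - 1])
    (hdN : ¬ N ∣ d) (hlt : digitSum b (d % N) < 1 + 2 * (b - 1)) :
    digitSum b (d % N) = 1 ∨ digitSum b (d % N) = b := by
  refine eq_one_or_eq_of_modEq_one ?_ hlt ?_
  · rwa [Ne, digitSum_eq_zero_iff, ← Nat.dvd_iff_mod_eq_zero]
  · exact (digitSum_modEq hb _).trans (((Nat.mod_modEq d N).of_dvd hN).trans hd)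

lemma digitSum_one_add_pow (hb : 1 < b) {r : ℕ} (hr : r ≠ 0) : digitSum b (1 + b ^ r) = 2 := by
  have h := digitSum_add_pow_mul hb (Nat.one_lt_pow hr hb) 1
  rwa [mul_one, digitSum_of_lt hb hb] at h

lemma pow_four_sub_one (b : ℕ) : b ^ 4 - 1 = (b ^ 2 - 1) * (1 + b ^ 2) := by
  rw [show b ^ 4 = (b ^ 2) ^ 2 by ring, add_comm, mul_comm]
  simpa using Nat.sq_sub_sq (b ^ 2) 1

lemma not_dvd_mul_of_coprime {d N A : ℕ} (hd : d.Coprime N) (hA : 0 < A) (hAN : A < N) :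
    ¬ N ∣ d * A := fun h =>
  Nat.not_dvd_of_pos_of_lt hA hAN (hd.symm.dvd_of_dvd_mul_left h)

lemma mod_sq_sub_one_eq (hb : 1 < b) {d : ℕ} (hd : d ≡ 1 [MOD b - 1])
    (hcop : d.Coprime (b ^ 4 - 1))
    (hlt : digitSum b (d * (1 + b ^ 2) % (b ^ 4 - 1)) < 2 * b) :
    d % (b ^ 2 - 1) = 1 ∨ d % (b ^ 2 - 1) = b := by
  have hsq : 4 ≤ b ^ 2 := by nlinarith
  have hlt' : d % (b ^ 2 - 1) < b ^ 2 - 1 := Nat.mod_lt _ (by omega)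
  have hdouble : digitSum b (d % (b ^ 2 - 1) * (1 + b ^ 2)) =
      2 * digitSum b (d % (b ^ 2 - 1)) := by
    rw [mul_one_add, mul_comm _ (b ^ 2), digitSum_add_pow_mul hb (by omega), two_mul]
  rw [pow_four_sub_one, Nat.mul_mod_mul_right, hdouble] at hlt
  have hndvd : ¬ b ^ 2 - 1 ∣ d := by
    have hcop' : d.Coprime (b ^ 2 - 1) := by
      rw [pow_four_sub_one] at hcop
      exact hcop.coprime_mul_right_right
    simpa using not_dvd_mul_of_coprime hcop' one_pos (by omega)
  have hdvd : b - 1 ∣ b ^ 2 - 1 := by simpa using Nat.sub_dvd_pow_sub_pow b 1 2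
  have hone : digitSum b (d % (b ^ 2 - 1)) = 1 :=
    (digitSum_mod_eq_one_or_eq hb hdvd hd hndvd (by omega)).resolve_right (by omega)
  obtain ⟨k, hk⟩ := exists_eq_pow_of_digitSum_eq_one hb hone
  have hk2 : k < 2 := (Nat.pow_lt_pow_iff_right hb).1 (by omega)
  interval_cases k <;> simp [hk]

lemma eq_zero_or_eq_zero_of_add_mul_modEq (hb : 1 < b) {x y : ℕ} (hxy : x + y = b)
    (h : x + b * y ≡ 1 [MOD b ^ 2 - 1] ∨ x + b * y ≡ b [MOD b ^ 2 - 1]) : x = 0 ∨ y = 0 := by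
  obtain ⟨t, rfl⟩ : ∃ t, b = t + 1 := ⟨b - 1, by omega⟩
  have ht : 0 < t := by omega
  have hsq : (t + 1) ^ 2 - 1 = t * (t + 2) := by
    rw [show (t + 1) ^ 2 = t * (t + 2) + 1 by ring, Nat.add_sub_cancel]
  have hsum : x + (t + 1) * y = t + 1 + t * y := by linarith
  rw [hsum, hsq] at h
  rcases h with h | h
  · have hdvd := (Nat.modEq_iff_dvd' (by omega)).1 h.symm
    rw [show t + 1 + t * y - 1 = t * (y + 1) by rw [mul_add]; omega] at hdvd
    have := Nat.le_of_dvd (by omega) (Nat.dvd_of_mul_dvd_mul_left ht hdvd)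
    omega
  · have hdvd := (Nat.modEq_iff_dvd' (by omega)).1 h.symm
    rw [Nat.add_sub_cancel_left] at hdvd
    have := Nat.eq_zero_of_dvd_of_lt (Nat.dvd_of_mul_dvd_mul_left ht hdvd) (by omega)
    omega

lemma eq_add_or_eq_mul_add (hb : 1 < b) {D : ℕ} (hD : D < b ^ 4) (hs : digitSum b D = b)
    (hmod : D ≡ 1 [MOD b ^ 2 - 1] ∨ D ≡ b [MOD b ^ 2 - 1]) :
    ∃ a < b, ∃ c < b, a + c = b ∧ (D = a + c * b ^ 2 ∨ D = b * (a + c * b ^ 2)) := by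
  have hb0 : 0 < b := by omega
  have hdigit : ∀ n, n % b < b := fun n => Nat.mod_lt n hb0
  obtain ⟨u₀, u₁, v₀, v₁, hu₀, hu₁, hv₀, hv₁, rfl⟩ : ∃ u₀ u₁ v₀ v₁, u₀ < b ∧ u₁ < b ∧ v₀ < b ∧
      v₁ < b ∧ D = u₀ + b * (u₁ + b * (v₀ + b * v₁)) := by
    refine ⟨D % b, D / b % b, D / b / b % b, D / b / b / b, hdigit _, hdigit _, hdigit _, ?_, ?_⟩
    · rw [Nat.div_div_eq_div_mul, Nat.div_div_eq_div_mul]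
      exact Nat.div_lt_of_lt_mul (by rwa [show b * (b * b) * b = b ^ 4 by ring])
    · simp only [Nat.mod_add_div]
  rw [digitSum_add_base_mul hb hu₀, digitSum_add_base_mul hb hu₁, digitSum_add_base_mul hb hv₀,
    digitSum_of_lt hb hv₁] at hs
  have hfold : u₀ + b * (u₁ + b * (v₀ + b * v₁)) ≡ u₀ + v₀ + b * (u₁ + v₁) [MOD b ^ 2 - 1] := by
    have hsq : b ^ 2 ≡ 1 [MOD b ^ 2 - 1] := Nat.modEq_sub (Nat.one_le_pow _ _ hb0)
    convert (hsq.mul_right (v₀ + b * v₁)).add_left (u₀ + b * u₁) using 1 <;> ring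
  have hmod' := hmod.imp hfold.symm.trans hfold.symm.trans
  rcases eq_zero_or_eq_zero_of_add_mul_modEq hb (by omega) hmod' with h | h
  · obtain ⟨rfl, rfl⟩ : u₀ = 0 ∧ v₀ = 0 := by omega
    exact ⟨u₁, hu₁, v₁, hv₁, by omega, Or.inr (by ring)⟩
  · obtain ⟨rfl, rfl⟩ : u₁ = 0 ∧ v₁ = 0 := by omega
    exact ⟨u₀, hu₀, v₀, hv₀, by omega, Or.inl (by ring)⟩

lemma digitSum_one_add_mul (hb : 1 < b) {a c : ℕ} (ha : a < b) (hc : c < b) :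
    digitSum b ((1 + b) * (a + c * b ^ 2)) = 2 * (a + c) := by
  have h : (1 + b) * (a + c * b ^ 2) = a + b * (a + b * (c + b * c)) := by ring
  rw [h, digitSum_add_base_mul hb ha, digitSum_add_base_mul hb ha, digitSum_add_base_mul hb hc,
    digitSum_of_lt hb hc]
  ring

lemma digitSum_mul_mod_of_modEq (hb : 1 < b) {d A a c : ℕ} (ha : a < b) (hc : c < b)
    (hA : ¬ b ^ 4 - 1 ∣ d * A)
    (hmod : d * A ≡ (1 + b) * (a + c * b ^ 2) [MOD b ^ 4 - 1]) :
    digitSum b (d * A % (b ^ 4 - 1)) = 2 * (a + c) := by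
  have hle : (1 + b) * (a + c * b ^ 2) ≤ b ^ 4 - 1 := by
    have hac : a + c * b ^ 2 ≤ (b - 1) * (1 + b ^ 2) := by
      rw [mul_one_add]
      exact Nat.add_le_add (by omega) (Nat.mul_le_mul_right _ (by omega))
    have hsq : b ^ 2 - 1 = (b + 1) * (b - 1) := by simpa using Nat.sq_sub_sq b 1
    rw [pow_four_sub_one, hsq, mul_assoc, add_comm 1 b]
    exact Nat.mul_le_mul_left _ hac
  have hne : (1 + b) * (a + c * b ^ 2) ≠ b ^ 4 - 1 := fun heq =>
    hA ((Nat.modEq_zero_iff_dvd).1 (hmod.trans (by simp [heq, Nat.ModEq])))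
  rw [hmod, Nat.mod_eq_of_lt (lt_of_le_of_ne hle hne), digitSum_one_add_mul hb ha hc]

/-- For prime `b`, Stickelberger's theorem yields `h` for an exponent all of whose Weil sums over a
field of order `b ^ (4 * m)` are divisible by `b ^ (2 * m + 1)`. -/
theorem exists_modEq_pow_of_digitSum_mul_lt (hb : 1 < b) {d : ℕ} (hd : d ≡ 1 [MOD b - 1])
    (hcop : d.Coprime (b ^ 4 - 1))
    (h : ∀ A, 0 < A → A < b ^ 4 - 1 →
      digitSum b (d * A % (b ^ 4 - 1)) < digitSum b A + 2 * (b - 1)) :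
    ∃ k, d ≡ b ^ k [MOD b ^ 4 - 1] := by
  have hsq : 4 ≤ b ^ 2 := by nlinarith
  have hpow : b ^ 2 < b ^ 3 ∧ 2 * b ^ 3 ≤ b ^ 4 := ⟨Nat.pow_lt_pow_right hb (by simp), by
    rw [pow_succ' b 3]; exact Nat.mul_le_mul_right _ hb⟩
  have hDmod := Nat.mod_modEq d (b ^ 4 - 1)
  have hdvd : b - 1 ∣ b ^ 4 - 1 := by simpa using Nat.sub_dvd_pow_sub_pow b 1 4
  have hDs := h 1 one_pos (by omega)
  rw [mul_one, digitSum_of_lt hb hb] at hDs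
  have hndvd := not_dvd_mul_of_coprime hcop one_pos (by omega)
  rcases digitSum_mod_eq_one_or_eq hb hdvd hd (by simpa using hndvd) hDs with hs | hs
  · obtain ⟨k, hk⟩ := exists_eq_pow_of_digitSum_eq_one hb hs
    exact ⟨k, hk ▸ hDmod.symm⟩
  have hmod : d % (b ^ 4 - 1) ≡ 1 [MOD b ^ 2 - 1] ∨ d % (b ^ 4 - 1) ≡ b [MOD b ^ 2 - 1] := by
    have hsqlt := h (1 + b ^ 2) (by omega) (by omega)
    rw [digitSum_one_add_pow hb two_ne_zero] at hsqlt
    have hD : d % (b ^ 4 - 1) ≡ d % (b ^ 2 - 1) [MOD b ^ 2 - 1] :=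
      (hDmod.of_dvd (pow_four_sub_one b ▸ dvd_mul_right _ _)).trans (Nat.mod_modEq _ _).symm
    rcases mod_sq_sub_one_eq hb hd hcop (by omega) with he | he <;> rw [he] at hD
    exacts [Or.inl hD, Or.inr hD]
  obtain ⟨a, ha, c, hc, hac, hD⟩ :=
    eq_add_or_eq_mul_add hb ((Nat.mod_lt d (by omega)).trans_le (Nat.sub_le _ _)) hs hmod
  obtain ⟨r, hr0, hr, hA⟩ : ∃ r, r ≠ 0 ∧ r ≤ 3 ∧
      d * (1 + b ^ r) ≡ (1 + b) * (a + c * b ^ 2) [MOD b ^ 4 - 1] := by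
    rcases hD with hD | hD
    · refine ⟨1, one_ne_zero, by omega, (hDmod.symm.mul_right _).trans ?_⟩
      rw [hD, pow_one, mul_comm]
    · refine ⟨3, three_ne_zero, le_rfl, (hDmod.symm.mul_right _).trans ?_⟩
      have hfour : b ^ 4 ≡ 1 [MOD b ^ 4 - 1] := Nat.modEq_sub (by omega)
      rw [hD]
      convert (hfour.mul_right (a + c * b ^ 2)).add_left (b * (a + c * b ^ 2)) using 1 <;> ring
  have hle : b ^ r ≤ b ^ 3 := Nat.pow_le_pow_right (by omega) hr
  have hlt := h (1 + b ^ r) (by omega) (by omega)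
  rw [digitSum_mul_mod_of_modEq hb ha hc
    (not_dvd_mul_of_coprime hcop (by omega) (by omega)) hA, digitSum_one_add_pow hb hr0] at hlt
  omega

end Degeneracy

section FiniteFieldSums

variable {F : Type*} [Field F]

lemma pow_mul_inv_one_sub_inv {x : F} (h0 : x ≠ 0) (h1 : x ≠ 1) (k : ℕ) :
    x ^ k * (1 - x⁻¹)⁻¹ = ∑ i ∈ Finset.range (k + 1), x ^ i + (x - 1)⁻¹ := by
  have hx : x - 1 ≠ 0 := sub_ne_zero.2 h1
  have hinv : 1 - x⁻¹ = (x - 1) * x⁻¹ := by field_simp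
  rw [geom_sum_eq h1, hinv]
  field_simp
  ring

variable [Fintype F]

lemma sum_inv_sub_one (hF : 2 < Fintype.card F) : ∑ x : F, (x - 1)⁻¹ = 0 := by
  calc ∑ x : F, (x - 1)⁻¹
    _ = ∑ x : F, x⁻¹ := Equiv.sum_comp (Equiv.subRight 1) (·⁻¹)
    _ = ∑ x : F, x := Equiv.sum_comp (Equiv.inv F) id
    _ = 0 := by simpa using FiniteField.sum_pow_lt_card_sub_one F 1 (by omega)

lemma sum_sdiff_zero_one [DecidableEq F] {M : Type*} [AddCommGroup M] (f : F → M) :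
    ∑ x ∈ Finset.univ \ {0, 1}, f x = ∑ x, f x - (f 0 + f 1) := by
  rw [← Finset.sum_sdiff (Finset.subset_univ {0, 1}), Finset.sum_pair zero_ne_one,
    add_sub_cancel_right]

lemma sum_inv_pow_mul_inv_one_sub [DecidableEq F] (hF : 2 < Fintype.card F) {k : ℕ}
    (hk : k + 1 < Fintype.card F) :
    ∑ x ∈ Finset.univ \ {0, 1}, x⁻¹ ^ k * (1 - x)⁻¹ = -((k : F) + 1) := by
  calc ∑ x ∈ (Finset.univ \ {0, 1} : Finset F), x⁻¹ ^ k * (1 - x)⁻¹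
    _ = ∑ x ∈ (Finset.univ \ {0, 1} : Finset F), x ^ k * (1 - x⁻¹)⁻¹ :=
        Finset.sum_nbij' (·⁻¹) (·⁻¹) (by simp) (by simp) (by simp) (by simp) (by simp)
    _ = ∑ x ∈ (Finset.univ \ {0, 1} : Finset F),
          (∑ i ∈ Finset.range (k + 1), x ^ i + (x - 1)⁻¹) := by
        refine Finset.sum_congr rfl fun x hx => ?_
        obtain ⟨h0, h1⟩ : x ≠ 0 ∧ x ≠ 1 := by simpa using hx
        exact pow_mul_inv_one_sub_inv h0 h1 k
    _ = -((k : F) + 1) := by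
        have hpow : ∑ x : F, ∑ i ∈ Finset.range (k + 1), x ^ i = 0 := by
          rw [Finset.sum_comm]
          refine Finset.sum_eq_zero fun i hi => FiniteField.sum_pow_lt_card_sub_one F i ?_
          have := Finset.mem_range.1 hi
          omega
        rw [sum_sdiff_zero_one, Finset.sum_add_distrib, hpow, sum_inv_sub_one hF]
        simp [zero_pow_eq]

lemma sum_inv_mul_pow {m : ℕ} (hm0 : m ≠ 0) (hm : m < Fintype.card F) :
    ∑ x : F, x⁻¹ * x ^ m = if m = 1 then -1 else 0 := by
  obtain ⟨n, rfl⟩ := Nat.exists_eq_succ_of_ne_zero hm0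
  have hzero : ∀ x : F, x⁻¹ * x ^ (n + 1) = x ^ n - if x = 0 then 0 ^ n else 0 := by
    intro x
    obtain rfl | hx := eq_or_ne x 0
    · simp
    · rw [if_neg hx, sub_zero, pow_succ', inv_mul_cancel_left₀ hx]
  simp only [Nat.succ_eq_add_one, hzero, Finset.sum_sub_distrib,
    FiniteField.sum_pow_lt_card_sub_one F n (by omega)]
  simp [zero_pow_eq, apply_ite]

lemma sum_inv_mul_trace (p : ℕ) [Fact p.Prime] [Algebra (ZMod p) F] :
    ∑ x : F, x⁻¹ * algebraMap (ZMod p) F (Algebra.trace (ZMod p) F x) = -1 := by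
  have hp := (Fact.out : p.Prime)
  have hcard : p ^ Module.finrank (ZMod p) F = Fintype.card F := by
    simpa using FiniteField.pow_finrank_eq_card p F
  simp only [FiniteField.algebraMap_trace_eq_sum_pow, Nat.card_zmod, Finset.mul_sum]
  rw [Finset.sum_comm]
  have hterm : ∀ i ∈ Finset.range (Module.finrank (ZMod p) F),
      ∑ x : F, x⁻¹ * x ^ p ^ i = if i = 0 then -1 else 0 := by
    intro i hi
    rw [sum_inv_mul_pow (pow_ne_zero i hp.ne_zero)
      (hcard ▸ Nat.pow_lt_pow_right hp.one_lt (Finset.mem_range.1 hi))]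
    simp [hp.ne_one]
  rw [Finset.sum_congr rfl hterm, Finset.sum_ite_eq', if_pos]
  exact Finset.mem_range.2 Module.finrank_pos

lemma pow_bijective_of_coprime {d : ℕ} (hd0 : d ≠ 0) (hd : d.Coprime (Fintype.card F - 1)) :
    Function.Bijective fun x : F => x ^ d := by
  refine Finite.injective_iff_bijective.1 fun x y (hxy : x ^ d = y ^ d) => ?_
  obtain rfl | hy := eq_or_ne y 0
  · rwa [zero_pow hd0, pow_eq_zero_iff hd0] at hxy
  have hx : x ≠ 0 := by
    rintro rfl
    exact pow_ne_zero d hy (by rw [← hxy, zero_pow hd0])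
  have hpow : (x / y) ^ d = 1 := by rw [div_pow, hxy, div_self (pow_ne_zero d hy)]
  have hcard := FiniteField.pow_card_sub_one_eq_one (x / y) (div_ne_zero hx hy)
  rw [← div_eq_one_iff_eq hy, ← pow_one (x / y), ← hd.gcd_eq_one]
  exact pow_gcd_eq_one.2 ⟨hpow, hcard⟩

lemma pow_eq_pow_of_modEq_card_sub_one {m n : ℕ} (hm : m ≠ 0) (hn : n ≠ 0)
    (h : m ≡ n [MOD Fintype.card F - 1]) (x : F) : x ^ m = x ^ n := by
  obtain rfl | hx := eq_or_ne x 0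
  · rw [zero_pow hm, zero_pow hn]
  · exact pow_eq_pow_of_modEq h (FiniteField.pow_card_sub_one_eq_one x hx)

end FiniteFieldSums

section BinomialSum

variable {F R : Type*} [Field F] [Fintype F] [CommRing R]

/-- The Weil sum of the binomial `x ^ d + a * x` for an arbitrary ring-valued additive character,
needed here over rings where `p` has a prime above it. -/
def binomialSum (ψ : AddChar F R) (d : ℕ) (a : F) : R := ∑ x, ψ (x ^ d + a * x)

lemma neg_pow_of_coprime_card_sub_one {d : ℕ} (hd0 : d ≠ 0) (hd : d.Coprime (Fintype.card F - 1))
    (x : F) : (-x) ^ d = -x ^ d := by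
  rcases neg_one_pow_eq_or F d with h | h
  · have hone : (-1 : F) = 1 := (pow_bijective_of_coprime hd0 hd).1 (by simpa using h)
    rw [← neg_one_mul x, ← neg_one_mul (x ^ d), hone, one_mul, one_mul]
  · rw [neg_pow, h, neg_one_mul]

variable [IsDomain R] {ψ : AddChar F R}

lemma binomialSum_zero {d : ℕ} (hd0 : d ≠ 0) (hd : d.Coprime (Fintype.card F - 1)) (hψ : ψ ≠ 1) :
    binomialSum ψ d 0 = 0 := by
  simp only [binomialSum, zero_mul, add_zero]
  rw [(pow_bijective_of_coprime hd0 hd).sum_comp (ψ ·)]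
  exact AddChar.sum_eq_zero_of_ne_one hψ

lemma sum_addChar_mul [DecidableEq F] (hψ : ψ ≠ 1) (y : F) :
    ∑ a, ψ (a * y) = if y = 0 then (Fintype.card F : R) else 0 := by
  simpa using AddChar.sum_mulShift y (.of_ne_one hψ)

lemma sum_binomialSum_mul_addChar (hψ : ψ ≠ 1) (d : ℕ) (y : F) :
    ∑ a, binomialSum ψ d a * ψ (-(a * y)) = Fintype.card F * ψ (y ^ d) := by
  have hshift : ∀ a x : F, ψ (x ^ d + a * x) * ψ (-(a * y)) = ψ (x ^ d) * ψ (a * (x - y)) := by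
    intro a x
    rw [← AddChar.map_add_eq_mul, ← AddChar.map_add_eq_mul]
    ring_nf
  simp only [binomialSum, Finset.sum_mul, hshift]
  rw [Finset.sum_comm]
  simp only [← Finset.mul_sum, sum_addChar_mul hψ, sub_eq_zero]
  simp [mul_comm]

lemma sum_binomialSum (hψ : ψ ≠ 1) {d : ℕ} (hd0 : d ≠ 0) :
    ∑ a, binomialSum ψ d a = Fintype.card F := by
  simpa [hd0] using sum_binomialSum_mul_addChar hψ d 0

lemma sum_binomialSum_pow_three (hψ : ψ ≠ 1) (d : ℕ) :
    ∑ a, binomialSum ψ d a ^ 3 =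
      Fintype.card F * ∑ x : F, ∑ y : F, ψ (x ^ d + y ^ d + (-x - y) ^ d) := by
  have hcube : ∀ a, binomialSum ψ d a ^ 3 =
      ∑ x : F, ∑ y : F, binomialSum ψ d a * ψ (-(a * (-x - y))) * ψ (x ^ d + y ^ d) := by
    intro a
    rw [pow_succ', pow_two, binomialSum, Finset.sum_mul_sum, ← binomialSum, Finset.mul_sum]
    refine Finset.sum_congr rfl fun x _ => ?_
    rw [Finset.mul_sum]
    refine Finset.sum_congr rfl fun y _ => ?_
    rw [mul_assoc, ← AddChar.map_add_eq_mul, ← AddChar.map_add_eq_mul]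
    ring_nf
  simp only [hcube]
  rw [Finset.sum_comm, Finset.mul_sum]
  refine Finset.sum_congr rfl fun x _ => ?_
  rw [Finset.sum_comm, Finset.mul_sum]
  refine Finset.sum_congr rfl fun y _ => ?_
  rw [← Finset.sum_mul, sum_binomialSum_mul_addChar hψ, mul_assoc, ← AddChar.map_add_eq_mul,
    add_comm]

lemma sum_sum_addChar_pow_add_pow [DecidableEq F] (hψ : ψ ≠ 1) {d : ℕ} (hd0 : d ≠ 0)
    (hd : d.Coprime (Fintype.card F - 1)) :
    ∑ x : F, ∑ y : F, ψ (x ^ d + y ^ d + (-x - y) ^ d) =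
      Fintype.card F * Finset.card {u : F | 1 + u ^ d + (-1 - u) ^ d = 0} := by
  have hscale : ∀ x : F, ∑ y : F, ψ (x ^ d + y ^ d + (-x - y) ^ d) =
      ∑ u : F, ψ (x ^ d * (1 + u ^ d + (-1 - u) ^ d)) := by
    intro x
    obtain rfl | hx := eq_or_ne x 0
    · simp [hd0, neg_pow_of_coprime_card_sub_one hd0 hd]
    · rw [← (mulLeft_bijective₀ x hx).sum_comp]
      refine Finset.sum_congr rfl fun u _ => ?_
      rw [mul_add, mul_add, mul_one, ← mul_pow, ← mul_pow, mul_sub, mul_neg_one]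
  simp only [hscale]
  rw [Finset.sum_comm]
  have hsum : ∀ e : F, ∑ x : F, ψ (x ^ d * e) = if e = 0 then (Fintype.card F : R) else 0 :=
    fun e => ((pow_bijective_of_coprime hd0 hd).sum_comp (fun x => ψ (x * e))).trans
      (sum_addChar_mul hψ e)
  simp only [hsum]
  rw [← Finset.sum_filter, Finset.sum_const, nsmul_eq_mul, mul_comm]

lemma card_mul_card_eq_of_binomialSum_pow_three [CharZero R] [DecidableEq F] (hψ : ψ ≠ 1) {d : ℕ}
    (hd0 : d ≠ 0) (hd : d.Coprime (Fintype.card F - 1)) {n : ℕ}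
    (hW : ∀ a, binomialSum ψ d a ^ 3 = n * binomialSum ψ d a) :
    Fintype.card F * Finset.card {u : F | 1 + u ^ d + (-1 - u) ^ d = 0} = n := by
  have hmoments := sum_binomialSum_pow_three hψ d
  simp_rw [hW, ← Finset.mul_sum, sum_binomialSum hψ hd0, sum_sum_addChar_pow_add_pow hψ hd0 hd]
    at hmoments
  refine Nat.eq_of_mul_eq_mul_left (Fintype.card_pos (α := F)) ?_
  rw [mul_comm _ n]
  exact_mod_cast hmoments.symm

lemma sum_mulChar_mul_addChar_mul {χ : MulChar F R} (hχ : χ ≠ 1) (x : F) :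
    ∑ a, χ a * ψ (a * x) = χ⁻¹ x * gaussSum χ ψ := by
  obtain rfl | hx := eq_or_ne x 0
  · simp [MulChar.sum_eq_zero_of_ne_one hχ, MulChar.map_zero]
  · have h := gaussSum_mulShift_eq χ ψ (Units.mk0 x hx)
    simpa only [gaussSum, AddChar.mulShift_apply, Units.val_mk0, mul_comm x] using h

lemma sum_mulChar_inv_mul_binomialSum_neg {d : ℕ} (hd0 : d ≠ 0)
    (hd : d.Coprime (Fintype.card F - 1)) {η : MulChar F R} (hη : η ^ d ≠ 1) :
    ∑ a, (η ^ d)⁻¹ a * binomialSum ψ d (-a) = gaussSum (η ^ d)⁻¹ ψ⁻¹ * gaussSum η ψ := by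
  calc ∑ a, (η ^ d)⁻¹ a * binomialSum ψ d (-a)
    _ = ∑ x, ψ (x ^ d) * ∑ a, (η ^ d)⁻¹ a * ψ⁻¹ (a * x) := by
        simp only [binomialSum, Finset.mul_sum]
        rw [Finset.sum_comm]
        refine Finset.sum_congr rfl fun x _ => Finset.sum_congr rfl fun a _ => ?_
        rw [AddChar.map_add_eq_mul, neg_mul, AddChar.inv_apply, mul_left_comm]
    _ = gaussSum (η ^ d)⁻¹ ψ⁻¹ * ∑ x, η (x ^ d) * ψ (x ^ d) := by
        rw [Finset.mul_sum]
        refine Finset.sum_congr rfl fun x _ => ?_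
        rw [sum_mulChar_mul_addChar_mul (inv_ne_one.2 hη), inv_inv, MulChar.pow_apply' _ hd0,
          map_pow η]
        ring
    _ = gaussSum (η ^ d)⁻¹ ψ⁻¹ * gaussSum η ψ := by
        rw [(pow_bijective_of_coprime hd0 hd).sum_comp (fun x => η x * ψ x)]
        rfl

lemma mul_gaussSum_pow_dvd_of_dvd_binomialSum (hψ : ψ ≠ 1) {d : ℕ} (hd0 : d ≠ 0)
    (hd : d.Coprime (Fintype.card F - 1)) {η : MulChar F R} (hη : η ^ d ≠ 1) {c : R}
    (hc : ∀ a, c ∣ binomialSum ψ d a) :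
    c * gaussSum (η ^ d) ψ ∣ gaussSum η ψ * Fintype.card F := by
  have hdvd : c ∣ ∑ a, (η ^ d)⁻¹ a * binomialSum ψ d (-a) :=
    Finset.dvd_sum fun a _ => (hc (-a)).mul_left _
  rw [sum_mulChar_inv_mul_binomialSum_neg hd0 hd hη] at hdvd
  rw [← gaussSum_mul_gaussSum_eq_card hη (.of_ne_one hψ)]
  convert mul_dvd_mul_right hdvd (gaussSum (η ^ d) ψ) using 1
  ring

end BinomialSum

section Integrality

variable {R : Type*} [CommRing R]

section Values

variable {F : Type*} [Field F] (p : ℕ) [CharP F p]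

lemma addChar_pow_char_eq_one (ψ : AddChar F R) (x : F) : ψ x ^ p = 1 := by
  rw [← AddChar.map_nsmul_eq_pow, nsmul_eq_mul, CharP.cast_eq_zero, zero_mul,
    AddChar.map_zero_eq_one]

lemma exists_isPrimitiveRoot_of_addChar_ne_one [Fact p.Prime] {ψ : AddChar F R} (hψ : ψ ≠ 1) :
    ∃ ζ : R, IsPrimitiveRoot ζ p := by
  obtain ⟨x, hx⟩ := AddChar.ne_one_iff.1 hψ
  exact ⟨ψ x, orderOf_eq_prime (addChar_pow_char_eq_one p ψ x) hx ▸ IsPrimitiveRoot.orderOf (ψ x)⟩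

end Values

variable [IsDomain R] [CharZero R]

lemma sum_pow_eq_intCast_of_coprime {n : ℕ} (hn : 0 < n) {ζ : R}
    (hζ : IsPrimitiveRoot ζ n) {k : ℕ} (hk : k.Coprime n) {ι : Type*} (s : Finset ι) (e : ι → ℕ)
    {w : ℤ} (hw : ∑ i ∈ s, ζ ^ e i = w) : ∑ i ∈ s, (ζ ^ k) ^ e i = w := by
  let f : Polynomial ℤ := ∑ i ∈ s, Polynomial.X ^ e i - Polynomial.C w
  have hf : ∀ y : R, Polynomial.aeval y f = 0 ↔ ∑ i ∈ s, y ^ e i = w := by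
    intro y
    simp [f, sub_eq_zero]
  rw [← hf] at hw ⊢
  have hdvd := minpoly.isIntegrallyClosed_dvd (hζ.isIntegral hn) hw
  rw [hζ.minpoly_eq_pow_coprime hk] at hdvd
  exact Polynomial.aeval_eq_zero_of_dvd_aeval_eq_zero hdvd (minpoly.aeval ℤ (ζ ^ k))

variable {F : Type*} [Field F] (p : ℕ) [Fact p.Prime] [CharP F p] {ψ : AddChar F R}

lemma sum_addChar_natCast_mul_eq_intCast (hψ : ψ ≠ 1) {k : ℕ} (hk : k.Coprime p) {ι : Type*}
    (s : Finset ι) (f : ι → F) {w : ℤ} (hw : ∑ i ∈ s, ψ (f i) = w) :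
    ∑ i ∈ s, ψ (k * f i) = w := by
  obtain ⟨ζ, hζ⟩ := exists_isPrimitiveRoot_of_addChar_ne_one p hψ
  have hp := (Fact.out : p.Prime)
  have hexp : ∀ y, ∃ e : ℕ, ψ y = ζ ^ e := fun y =>
    let ⟨e, _, he⟩ := hζ.eq_pow_of_pow_eq_one (addChar_pow_char_eq_one p ψ y)
    ⟨e, he.symm⟩
  choose e he using hexp
  simp only [he] at hw
  rw [← sum_pow_eq_intCast_of_coprime hp.pos hζ hk s (fun i => e (f i)) hw]
  refine Finset.sum_congr rfl fun i _ => ?_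
  rw [← nsmul_eq_mul, AddChar.map_nsmul_eq_pow, he (f i), pow_right_comm]

lemma natCast_pow_eq_of_binomialSum_int [Fintype F] (hψ : ψ ≠ 1) {d : ℕ} (hd0 : d ≠ 0)
    (hd : d.Coprime (Fintype.card F - 1)) (hW : ∀ a, ∃ w : ℤ, binomialSum ψ d a = w) {k : ℕ}
    (hk : k.Coprime p) : (k : F) ^ d = k := by
  have hprim : ψ.IsPrimitive := .of_ne_one hψ
  have hk0 : (k : F) ≠ 0 := by
    rw [Ne, CharP.cast_eq_zero_iff F p]
    exact (Nat.Prime.coprime_iff_not_dvd Fact.out).1 hk.symm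
  have hconj : ∀ a, binomialSum (ψ.mulShift k) d a = binomialSum ψ d a := by
    intro a
    obtain ⟨w, hw⟩ := hW a
    rw [hw]
    exact sum_addChar_natCast_mul_eq_intCast p hψ hk Finset.univ _ hw
  have hcard : (Fintype.card F : R) ≠ 0 := Nat.cast_ne_zero.2 Fintype.card_ne_zero
  refine AddChar.to_mulShift_inj_of_isPrimitive hprim (DFunLike.ext _ _ fun z => ?_)
  obtain ⟨y, rfl⟩ := (pow_bijective_of_coprime hd0 hd).2 z
  refine mul_left_cancel₀ hcard ?_
  calc (Fintype.card F : R) * ψ (k ^ d * y ^ d)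
    _ = ∑ a, binomialSum ψ d a * ψ (-(a * (k * y))) := by
        rw [sum_binomialSum_mul_addChar hψ, mul_pow]
    _ = ∑ a, binomialSum (ψ.mulShift k) d a * ψ.mulShift k (-(a * y)) := by
        simp only [hconj, AddChar.mulShift_apply, mul_neg, mul_left_comm]
    _ = Fintype.card F * ψ (k * y ^ d) := by
        rw [sum_binomialSum_mul_addChar (hprim hk0), AddChar.mulShift_apply]

lemma modEq_one_of_binomialSum_int [Fintype F] (hψ : ψ ≠ 1) {d : ℕ} (hd0 : d ≠ 0)
    (hd : d.Coprime (Fintype.card F - 1)) (hW : ∀ a, ∃ w : ℤ, binomialSum ψ d a = w) :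
    d ≡ 1 [MOD p - 1] := by
  have hpow : ∀ u : (ZMod p)ˣ, u ^ (d - 1) = 1 := by
    intro u
    have hu := natCast_pow_eq_of_binomialSum_int p hψ hd0 hd hW (ZMod.val_coe_unit_coprime u)
    rw [← Nat.cast_pow, CharP.natCast_eq_natCast F p, ← ZMod.natCast_eq_natCast_iff,
      Nat.cast_pow, ZMod.natCast_zmod_val] at hu
    have hmul : u ^ (d - 1) * u = 1 * u := by
      rw [← pow_succ, Nat.sub_one_add_one hd0, one_mul]
      exact Units.ext hu
    exact mul_right_cancel hmul
  rw [FiniteField.forall_pow_eq_one_iff, ZMod.card] at hpow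
  exact ((Nat.modEq_iff_dvd' (Nat.one_le_iff_ne_zero.2 hd0)).2 hpow).symm

end Integrality

section TraceCharacter

variable {p : ℕ} [Fact p.Prime] (F : Type*) [Field F] [Algebra (ZMod p) F] {R : Type*} [CommRing R]
  {ζ : R}

/-- The additive character `x ↦ ζ ^ Tr x` of a finite field of characteristic `p` attached to a
`p`-th root of unity `ζ`. -/
noncomputable def traceAddChar (hζ : ζ ^ p = 1) : AddChar F R :=
  (AddChar.zmodChar p hζ).compAddMonoidHom (Algebra.trace (ZMod p) F).toAddMonoidHom

lemma traceAddChar_apply (hζ : ζ ^ p = 1) (x : F) :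
    traceAddChar F hζ x = ζ ^ (Algebra.trace (ZMod p) F x).val := rfl

lemma traceAddChar_ne_one [Finite F] (hζ : IsPrimitiveRoot ζ p) :
    traceAddChar F hζ.pow_eq_one ≠ 1 := by
  have hp := (Fact.out : p.Prime)
  obtain ⟨x, hx⟩ := Algebra.trace_surjective (ZMod p) F 1
  refine AddChar.ne_one_iff.2 ⟨x, ?_⟩
  rw [traceAddChar_apply, hx, ZMod.val_one, pow_one]
  exact hζ.ne_one hp.one_lt

lemma traceAddChar_pow_char [Finite F] (hζ : ζ ^ p = 1) (x : F) :
    traceAddChar F hζ (x ^ p) = traceAddChar F hζ x := by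
  have htrace : Algebra.trace (ZMod p) F (x ^ p) = Algebra.trace (ZMod p) F x := by
    simpa using
      Algebra.trace_eq_of_algEquiv (FiniteField.frobeniusAlgEquivOfAlgebraic (ZMod p) F) x
  rw [traceAddChar_apply, traceAddChar_apply, htrace]

lemma gaussSum_pow_char [Fintype F] (hζ : ζ ^ p = 1) (χ : MulChar F R) :
    gaussSum (χ ^ p) (traceAddChar F hζ) = gaussSum χ (traceAddChar F hζ) := by
  have hp := (Fact.out : p.Prime)
  have hchar : CharP F p := charP_of_injective_algebraMap (algebraMap (ZMod p) F).injective p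
  have hbij : Function.Bijective fun x : F => x ^ p :=
    Finite.injective_iff_bijective.1 (frobenius_inj F p)
  rw [gaussSum, gaussSum, ← hbij.sum_comp fun x => χ x * traceAddChar F hζ x]
  refine Finset.sum_congr rfl fun x _ => ?_
  rw [MulChar.pow_apply' _ hp.ne_zero, map_pow χ, traceAddChar_pow_char]

end TraceCharacter

section Stickelberger

open IsLocalRing

lemma eq_one_of_pow_char_eq_one {κ : Type*} [CommRing κ] [IsReduced κ] (p : ℕ) [Fact p.Prime]
    [CharP κ p] {x : κ} (hx : x ^ p = 1) : x = 1 :=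
  frobenius_inj κ p (by rw [frobenius_def, frobenius_def, hx, one_pow])

lemma associated_natCast_sub_one_pow {R : Type*} [CommRing R] [IsDomain R] {p : ℕ} [Fact p.Prime]
    {ζ : R} (hζ : IsPrimitiveRoot ζ p) : Associated (p : R) ((ζ - 1) ^ (p - 1)) := by
  have hp := (Fact.out : p.Prime)
  have hprod : (p : R) = ∏ μ ∈ primitiveRoots p R, (1 - μ) := by
    have h := Polynomial.eval_one_cyclotomic_prime (R := R) (p := p)
    rw [Polynomial.cyclotomic_eq_prod_X_sub_primitiveRoots hζ, Polynomial.eval_prod] at h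
    simpa using h.symm
  have hcard : (primitiveRoots p R).card = p - 1 := by
    rw [hζ.card_primitiveRoots, Nat.totient_prime hp]
  rw [hprod, ← hcard, ← Finset.prod_const]
  refine Associated.prod _ _ _ fun μ hμ => ?_
  obtain ⟨i, -, hi, rfl⟩ := hζ.isPrimitiveRoot_iff.1 (isPrimitiveRoot_of_mem_primitiveRoots hμ)
  rw [← neg_sub]
  exact (hζ.associated_sub_one_pow_sub_one_of_coprime hi).symm.neg_left

variable {F R : Type*} [Field F] [CommRing R] [IsLocalRing R]
  [Algebra F (ResidueField R)]

/-- A Teichmüller character: a multiplicative character of `F` with values in a local ring `R` that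
lifts a given embedding of `F` into the residue field of `R`. -/
def IsTeichmuller (ω : MulChar F R) : Prop :=
  ∀ x, residue R (ω x) = algebraMap F (ResidueField R) x

variable {ω : MulChar F R}

namespace IsTeichmuller

lemma residue_inv (hω : IsTeichmuller ω) (x : F) :
    residue R (ω⁻¹ x) = algebraMap F (ResidueField R) x⁻¹ := by
  rw [MulChar.inv_apply', hω]

lemma residue_inv_pow (hω : IsTeichmuller ω) (k : ℕ) {x : F} (hx : x ≠ 0) :
    residue R ((ω⁻¹ ^ k) x) = algebraMap F (ResidueField R) (x⁻¹ ^ k) := by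
  rw [← Units.val_mk0 hx, MulChar.pow_apply_coe, map_pow, hω.residue_inv, map_pow]

variable [Fintype F]

lemma pow_eq_one_iff (hω : IsTeichmuller ω) {j : ℕ} : ω ^ j = 1 ↔ Fintype.card F - 1 ∣ j := by
  refine ⟨fun h => ?_, fun h => orderOf_dvd_iff_pow_eq_one.1 (ω.orderOf_dvd_card_sub_one.trans h)⟩
  refine (FiniteField.forall_pow_eq_one_iff F j).1 fun u => Units.ext ?_
  refine (algebraMap F (ResidueField R)).injective ?_
  rw [Units.val_pow_eq_pow_val, map_pow, ← hω, ← map_pow, ← MulChar.pow_apply_coe, h,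
    MulChar.one_apply_coe, map_one, Units.val_one, map_one]

lemma isUnit_jacobiSum (hω : IsTeichmuller ω) (p : ℕ) [CharP F p] (hF : 2 < Fintype.card F) {k : ℕ}
    (hk : k + 1 < Fintype.card F) (hpk : ¬ p ∣ k + 1) : IsUnit (jacobiSum (ω⁻¹ ^ k) ω⁻¹) := by
  have hres : residue R (jacobiSum (ω⁻¹ ^ k) ω⁻¹) =
      algebraMap F (ResidueField R) (-((k : F) + 1)) := by
    rw [jacobiSum_eq_sum_sdiff, ← sum_inv_pow_mul_inv_one_sub hF hk, map_sum, map_sum]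
    refine Finset.sum_congr rfl fun x hx => ?_
    obtain ⟨h0, -⟩ : x ≠ 0 ∧ x ≠ 1 := by simpa using hx
    rw [map_mul, map_mul, hω.residue_inv_pow k h0, hω.residue_inv]
  rw [← residue_ne_zero_iff_isUnit, hres]
  rwa [map_ne_zero, neg_ne_zero, ← Nat.cast_succ, Ne, CharP.cast_eq_zero_iff F p]

lemma inv_pow_mod (hω : IsTeichmuller ω) (j : ℕ) : ω⁻¹ ^ (j % (Fintype.card F - 1)) = ω⁻¹ ^ j := by
  have hcard : ω⁻¹ ^ (Fintype.card F - 1) = 1 := by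
    rw [inv_pow, hω.pow_eq_one_iff.2 dvd_rfl, inv_one]
  exact (pow_eq_pow_mod j hcard).symm

lemma inv_pow_ne_one (hω : IsTeichmuller ω) {j : ℕ} (hj0 : j ≠ 0) (hj : j < Fintype.card F - 1) :
    ω⁻¹ ^ j ≠ 1 := by
  rw [inv_pow, Ne, inv_eq_one, hω.pow_eq_one_iff]
  exact Nat.not_dvd_of_pos_of_lt (Nat.pos_of_ne_zero hj0) hj

variable [IsDomain R] {p : ℕ} [Fact p.Prime] [Algebra (ZMod p) F] {ζ : R}

lemma associated_gaussSum_inv (hω : IsTeichmuller ω) (hF : 2 < Fintype.card F) (hζ : ζ ^ p = 1) :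
    Associated (gaussSum ω⁻¹ (traceAddChar F hζ)) (ζ - 1) := by
  have hcharF : CharP F p := charP_of_injective_algebraMap (algebraMap (ZMod p) F).injective p
  have hchar : CharP (ResidueField R) p :=
    charP_of_injective_algebraMap (algebraMap F (ResidueField R)).injective p
  let tr (x : F) : ZMod p := Algebra.trace (ZMod p) F x
  let c : R := ∑ x, ω⁻¹ x * ∑ i ∈ Finset.range (tr x).val, ζ ^ i
  have hω_ne : ω⁻¹ ≠ 1 := by simpa using hω.inv_pow_ne_one one_ne_zero (by omega)
  have hgauss : gaussSum ω⁻¹ (traceAddChar F hζ) = c * (ζ - 1) := by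
    calc gaussSum ω⁻¹ (traceAddChar F hζ)
      _ = gaussSum ω⁻¹ (traceAddChar F hζ) - ∑ x, ω⁻¹ x := by
        rw [MulChar.sum_eq_zero_of_ne_one hω_ne, sub_zero]
      _ = ∑ x, ω⁻¹ x * (ζ ^ (tr x).val - 1) := by
        simp only [gaussSum, traceAddChar_apply, tr, mul_sub, mul_one, Finset.sum_sub_distrib]
      _ = c * (ζ - 1) := by
        rw [Finset.sum_mul]
        simp only [mul_assoc, geom_sum_mul]
  have hres_ζ : residue R ζ = 1 := eq_one_of_pow_char_eq_one p (by rw [← map_pow, hζ, map_one])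
  have htr : ∀ x, algebraMap (ZMod p) F (tr x) = (tr x).val := fun x => by
    rw [← map_natCast (algebraMap (ZMod p) F), ZMod.natCast_zmod_val]
  have hres : residue R c = -1 := by
    calc residue R c
      _ = ∑ x, algebraMap F (ResidueField R) (x⁻¹ * algebraMap (ZMod p) F (tr x)) := by
        rw [map_sum]
        refine Finset.sum_congr rfl fun x _ => ?_
        rw [map_mul, map_mul, hω.residue_inv, htr, map_natCast, map_sum]
        simp only [map_pow, hres_ζ, one_pow, Finset.sum_const, Finset.card_range, nsmul_one]
      _ = -1 := by rw [← map_sum, sum_inv_mul_trace, map_neg, map_one]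
  have hc : IsUnit c := by
    rw [← residue_ne_zero_iff_isUnit, hres]
    exact neg_ne_zero.2 one_ne_zero
  rw [hgauss]
  exact associated_unit_mul_left _ _ hc

theorem associated_gaussSum_inv_pow (hω : IsTeichmuller ω) (hζ : IsPrimitiveRoot ζ p) {j : ℕ}
    (hj : j < Fintype.card F - 1) :
    Associated (gaussSum (ω⁻¹ ^ j) (traceAddChar F hζ.pow_eq_one)) ((ζ - 1) ^ digitSum p j) := by
  have hp := (Fact.out : p.Prime)
  have hchar : CharP F p := charP_of_injective_algebraMap (algebraMap (ZMod p) F).injective p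
  induction j using Nat.strong_induction_on with
  | _ j ih =>
    obtain rfl | hj0 := eq_or_ne j 0
    · rw [pow_zero, digitSum_zero, pow_zero, gaussSum_one_left (traceAddChar_ne_one F hζ)]
      exact (Associated.refl _).neg_left
    by_cases hpj : p ∣ j
    · obtain ⟨k, rfl⟩ := hpj
      have hk : k < p * k :=
        lt_mul_of_one_lt_left (Nat.pos_of_ne_zero (right_ne_zero_of_mul hj0)) hp.one_lt
      rw [digitSum_base_mul hp.one_lt, mul_comm, pow_mul, gaussSum_pow_char]
      exact ih k hk (hk.trans hj)
    · obtain ⟨k, rfl⟩ := Nat.exists_eq_succ_of_ne_zero hj0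
      have hF : 2 < Fintype.card F := by omega
      have hjacobi := jacobiSum_mul_nontrivial (pow_succ ω⁻¹ k ▸ hω.inv_pow_ne_one hj0 hj)
        (traceAddChar F hζ.pow_eq_one)
      have hunit := hω.isUnit_jacobiSum p hF (k := k) (by omega) hpj
      rw [digitSum_succ_of_not_dvd hp.one_lt hpj, pow_succ, pow_succ]
      refine (associated_mul_unit_right _ _ hunit).trans ?_
      rw [hjacobi]
      exact (ih k k.lt_succ_self (by omega)).mul_mul (hω.associated_gaussSum_inv hF hζ.pow_eq_one)

end IsTeichmuller

end Stickelberger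

section TeichmullerExistence

open IsLocalRing

lemma exists_pow_eq_one_and_map_eq {R κ : Type*} [CommRing R] [IsDomain R] [CommRing κ] [IsDomain κ]
    (f : R →+* κ) {n : ℕ} (hn : 0 < n) {ζ : R} (hζ : IsPrimitiveRoot ζ n) {y : κ} (hy : y ^ n = 1) :
    ∃ z : R, z ^ n = 1 ∧ f z = y := by
  have hprod : ∏ z ∈ Polynomial.nthRootsFinset n (1 : R), (y - f z) = 0 := by
    simpa [Polynomial.eval₂_finsetProd, hy] using
      (congrArg (Polynomial.eval₂ f y) (Polynomial.X_pow_sub_one_eq_prod hn hζ)).symm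
  obtain ⟨z, hz, hzy⟩ := Finset.prod_eq_zero_iff.1 hprod
  exact ⟨z, (Polynomial.mem_nthRootsFinset hn 1).1 hz, (sub_eq_zero.1 hzy).symm⟩

lemma exists_isTeichmuller {F R : Type*} [Field F] [Fintype F] [CommRing R] [IsDomain R]
    [IsLocalRing R] [Algebra F (ResidueField R)] {ζ : R}
    (hζ : IsPrimitiveRoot ζ (Fintype.card F - 1)) : ∃ ω : MulChar F R, IsTeichmuller ω := by
  have hcard : 0 < Fintype.card F - 1 := Nat.sub_pos_of_lt Fintype.one_lt_card
  obtain ⟨g, hg⟩ := IsCyclic.exists_generator (α := Fˣ)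
  have hg_pow : algebraMap F (ResidueField R) g ^ (Fintype.card F - 1) = 1 := by
    rw [← map_pow, FiniteField.pow_card_sub_one_eq_one _ g.ne_zero, map_one]
  obtain ⟨z, hz, hzg⟩ := exists_pow_eq_one_and_map_eq (residue R) hcard hζ hg_pow
  have hz_mem : Units.ofPowEqOne z _ hz hcard.ne' ∈ rootsOfUnity (Fintype.card Fˣ) R := by
    rw [mem_rootsOfUnity, Fintype.card_units]
    exact Units.pow_ofPowEqOne hz hcard.ne'
  refine ⟨MulChar.ofRootOfUnity hz_mem hg, fun x => ?_⟩
  obtain rfl | hx := eq_or_ne x 0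
  · rw [MulChar.map_zero, map_zero, map_zero]
  · obtain ⟨i, hi⟩ := (mem_powers_iff_mem_zpowers (x := g)).2 (hg (Units.mk0 x hx))
    have hx_pow : x = (g : F) ^ i := by simpa using (congrArg Units.val hi).symm
    rw [hx_pow, map_pow, map_pow, map_pow, MulChar.ofRootOfUnity_spec, Units.val_ofPowEqOne, hzg]

end TeichmullerExistence

section McEliece

open IsLocalRing

variable {F R : Type*} [Field F] [Fintype F] [CommRing R] [IsDomain R] [IsLocalRing R]
  [Algebra F (ResidueField R)] {ω : MulChar F R} {p : ℕ} [Fact p.Prime] [Algebra (ZMod p) F] {ζ : R}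

lemma not_isUnit_sub_one_of_pow_char_eq_one {R : Type*} [CommRing R] [IsLocalRing R] (p : ℕ)
    [Fact p.Prime] [CharP (ResidueField R) p] {ζ : R} (hζ : ζ ^ p = 1) : ¬ IsUnit (ζ - 1) := by
  rw [← residue_ne_zero_iff_isUnit, not_not, map_sub, map_one, sub_eq_zero]
  exact eq_one_of_pow_char_eq_one p (by rw [← map_pow, hζ, map_one])

theorem IsTeichmuller.digitSum_add_le (hω : IsTeichmuller ω) (hζ : IsPrimitiveRoot ζ p) {d : ℕ}
    (hd0 : d ≠ 0) (hd : d.Coprime (Fintype.card F - 1)) {e : ℕ}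
    (he : ∀ a, (p : R) ^ e ∣ binomialSum (traceAddChar F hζ.pow_eq_one) d a) {j : ℕ} (hj0 : j ≠ 0)
    (hj : j < Fintype.card F - 1) :
    (p - 1) * e + digitSum p (d * j % (Fintype.card F - 1)) ≤
      digitSum p j + (p - 1) * Module.finrank (ZMod p) F := by
  let ψ := traceAddChar F hζ.pow_eq_one
  let i := d * j % (Fintype.card F - 1)
  have hp := (Fact.out : p.Prime)
  have hcharF : CharP F p := charP_of_injective_algebraMap (algebraMap (ZMod p) F).injective p
  have hcharκ : CharP (ResidueField R) p :=
    charP_of_injective_algebraMap (algebraMap F (ResidueField R)).injective p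
  have hi : i < Fintype.card F - 1 := Nat.mod_lt _ (by omega)
  have hi0 : i ≠ 0 := fun h =>
    Nat.not_dvd_of_pos_of_lt (Nat.pos_of_ne_zero hj0) hj
      (hd.symm.dvd_of_dvd_mul_left (Nat.dvd_of_mod_eq_zero h))
  have hpow : (ω⁻¹ ^ j) ^ d = ω⁻¹ ^ i := by rw [← pow_mul, mul_comm j d, hω.inv_pow_mod]
  have hcardF : (Fintype.card F : R) = (p : R) ^ Module.finrank (ZMod p) F := by
    rw [Module.card_eq_pow_finrank (K := ZMod p), ZMod.card, Nat.cast_pow]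
  have hassoc := associated_natCast_sub_one_pow hζ
  have hleft : Associated ((p : R) ^ e * gaussSum (ω⁻¹ ^ i) ψ)
      ((ζ - 1) ^ ((p - 1) * e + digitSum p i)) := by
    rw [pow_add, pow_mul]
    exact hassoc.pow_pow.mul_mul (hω.associated_gaussSum_inv_pow hζ hi)
  have hright : Associated (gaussSum (ω⁻¹ ^ j) ψ * Fintype.card F)
      ((ζ - 1) ^ (digitSum p j + (p - 1) * Module.finrank (ZMod p) F)) := by
    rw [hcardF, pow_add, pow_mul]
    exact (hω.associated_gaussSum_inv_pow hζ hj).mul_mul hassoc.pow_pow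
  have hdvd := mul_gaussSum_pow_dvd_of_dvd_binomialSum (traceAddChar_ne_one F hζ) hd0 hd
    (η := ω⁻¹ ^ j) (hpow ▸ hω.inv_pow_ne_one hi0 hi) he
  rw [hpow, hleft.dvd_iff_dvd_left, hright.dvd_iff_dvd_right] at hdvd
  refine (pow_dvd_pow_iff (sub_ne_zero.2 (hζ.ne_one hp.one_lt)) ?_).1 hdvd
  exact not_isUnit_sub_one_of_pow_char_eq_one p hζ.pow_eq_one

end McEliece

section FixedPoints

lemma card_le_card_one_add_pow_add_pow_eq_zero (E : Type*) {F : Type*} [Field E] [Fintype E]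
    [Field F] [Fintype F] [DecidableEq F] [Algebra E F] (p : ℕ) [Fact p.Prime] [CharP E p]
    {d k : ℕ} (hd0 : d ≠ 0) (hd : d ≡ p ^ k [MOD Fintype.card E - 1]) :
    Fintype.card E ≤ Finset.card {u : F | 1 + u ^ d + (-1 - u) ^ d = 0} := by
  have hp := (Fact.out : p.Prime)
  have hfrob (x : E) : x ^ d = x ^ p ^ k :=
    pow_eq_pow_of_modEq_card_sub_one hd0 (pow_ne_zero _ hp.ne_zero) hd x
  have hE (x : E) : 1 + x ^ d + (-1 - x) ^ d = 0 := by
    calc 1 + x ^ d + (-1 - x) ^ d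
      _ = 1 ^ p ^ k + x ^ p ^ k + (-1 - x) ^ p ^ k := by rw [hfrob, hfrob, one_pow]
      _ = (1 + x + (-1 - x)) ^ p ^ k := by rw [add_pow_char_pow, add_pow_char_pow]
      _ = 0 := by rw [add_add_sub_cancel, add_neg_cancel, zero_pow (pow_ne_zero _ hp.ne_zero)]
  rw [← Finset.card_univ]
  refine Finset.card_le_card_of_injOn (algebraMap E F) (fun x _ => ?_)
    (algebraMap E F).injective.injOn
  simpa using congrArg (algebraMap E F) (hE x)

lemma pow_le_card_one_add_pow_add_pow_eq_zero {F : Type*} [Field F] [Fintype F] [DecidableEq F]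
    (p : ℕ) [Fact p.Prime] [Algebra (ZMod p) F] {n d k : ℕ} (hn : n ∣ Module.finrank (ZMod p) F)
    (hd0 : d ≠ 0) (hd : d ≡ p ^ k [MOD p ^ n - 1]) :
    p ^ n ≤ Finset.card {u : F | 1 + u ^ d + (-1 - u) ^ d = 0} := by
  have hn0 : n ≠ 0 := ne_zero_of_dvd_ne_zero Module.finrank_pos.ne' hn
  have := Fintype.ofFinite (GaloisField p n)
  have hcard : Fintype.card (GaloisField p n) = p ^ n := by
    rw [← Nat.card_eq_fintype_card, GaloisField.card p n hn0]
  obtain ⟨f⟩ : Nonempty (GaloisField p n →ₐ[ZMod p] F) :=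
    FiniteField.nonempty_algHom_of_finrank_dvd (by rwa [GaloisField.finrank p hn0])
  let := f.toAlgebra
  rw [← hcard] at hd ⊢
  exact card_le_card_one_add_pow_add_pow_eq_zero (GaloisField p n) p hd0 hd

end FixedPoints

section ThreeValued

open IsLocalRing

variable {F R : Type*} [Field F] [Fintype F] [CommRing R] [IsDomain R] [IsLocalRing R]
  [Algebra F (ResidueField R)] {ω : MulChar F R} {p : ℕ} [Fact p.Prime] [Algebra (ZMod p) F] {ζ : R}
  {d m : ℕ}

theorem IsTeichmuller.exists_modEq_pow (hω : IsTeichmuller ω) (hζ : IsPrimitiveRoot ζ p)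
    (hd0 : d ≠ 0) (hd : d.Coprime (Fintype.card F - 1)) (hd1 : d ≡ 1 [MOD p - 1])
    (hm : Module.finrank (ZMod p) F = 4 * m)
    (hW : ∀ a, (p : R) ^ (2 * m + 1) ∣ binomialSum (traceAddChar F hζ.pow_eq_one) d a) :
    ∃ k, d ≡ p ^ k [MOD p ^ 4 - 1] := by
  have hp := (Fact.out : p.Prime)
  let s := ∑ i ∈ Finset.range m, (p ^ 4) ^ i
  have hcard : Fintype.card F - 1 = (p ^ 4 - 1) * s := by
    rw [Module.card_eq_pow_finrank (K := ZMod p), ZMod.card, hm, pow_mul, mul_comm,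
      geom_sum_mul_of_one_le (Nat.one_le_pow _ _ hp.pos)]
  have hcard0 : 0 < (p ^ 4 - 1) * s := hcard ▸ Nat.sub_pos_of_lt Fintype.one_lt_card
  have hs : 0 < s := Nat.pos_of_mul_pos_left hcard0
  refine exists_modEq_pow_of_digitSum_mul_lt hp.one_lt hd1
    (hd.coprime_dvd_right (hcard ▸ Nat.dvd_mul_right _ _)) fun A hA0 hA => ?_
  have hmceliece := hω.digitSum_add_le hζ hd0 hd hW (j := A * s) (by positivity)
    (hcard ▸ Nat.mul_lt_mul_of_pos_right hA hs)
  have hB : d * A % (p ^ 4 - 1) < p ^ 4 := (Nat.mod_lt _ (by omega)).trans_le (Nat.sub_le _ _)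
  rw [hcard, ← mul_assoc, Nat.mul_mod_mul_right, digitSum_mul_geom_sum hp.one_lt hB,
    digitSum_mul_geom_sum hp.one_lt (by omega), hm] at hmceliece
  by_contra! hlt
  have hmul := Nat.mul_le_mul_left m hlt
  have hp1 : 0 < p - 1 := Nat.sub_pos_of_lt hp.one_lt
  linarith

theorem IsTeichmuller.not_forall_binomialSum_eq [CharZero R] (hω : IsTeichmuller ω)
    (hζ : IsPrimitiveRoot ζ p) (hd0 : d ≠ 0) (hd : d.Coprime (Fintype.card F - 1))
    (hm : Module.finrank (ZMod p) F = 4 * m) :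
    ¬ ∀ a ≠ 0, binomialSum (traceAddChar F hζ.pow_eq_one) d a ∈
      ({0, (p : R) ^ (2 * m + 1), -(p : R) ^ (2 * m + 1)} : Set R) := by
  classical
  intro hval
  have hp := (Fact.out : p.Prime)
  have hcharF : CharP F p := charP_of_injective_algebraMap (algebraMap (ZMod p) F).injective p
  have hψ := traceAddChar_ne_one F hζ
  have hsign : ∀ a, ∃ ε : ℤ, ε ^ 3 = ε ∧
      binomialSum (traceAddChar F hζ.pow_eq_one) d a = ε * (p : R) ^ (2 * m + 1) := fun a => by
    obtain rfl | ha := eq_or_ne a 0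
    · exact ⟨0, by norm_num, by simpa using binomialSum_zero hd0 hd hψ⟩
    rcases hval a ha with h | h | h
    exacts [⟨0, by norm_num, by simpa using h⟩, ⟨1, by norm_num, by simpa using h⟩,
      ⟨-1, by norm_num, by simpa using h⟩]
  choose ε hε hW using hsign
  have hd1 : d ≡ 1 [MOD p - 1] := modEq_one_of_binomialSum_int p hψ hd0 hd fun a =>
    ⟨ε a * p ^ (2 * m + 1), by rw [hW]; push_cast; rfl⟩
  obtain ⟨k, hk⟩ := hω.exists_modEq_pow hζ hd0 hd hd1 hm fun a => hW a ▸ dvd_mul_left _ _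
  have hlower := pow_le_card_one_add_pow_add_pow_eq_zero p (hm ▸ dvd_mul_right 4 m) hd0 hk
  have hcount := card_mul_card_eq_of_binomialSum_pow_three hψ hd0 hd (n := (p ^ (2 * m + 1)) ^ 2)
    fun a => by
      rw [hW, mul_pow, ← Int.cast_pow, hε]
      push_cast
      ring
  have hF : Fintype.card F = p ^ (4 * m) := by
    rw [Module.card_eq_pow_finrank (K := ZMod p), ZMod.card, hm]
  have hupper : Finset.card {u : F | 1 + u ^ d + (-1 - u) ^ d = 0} = p ^ 2 := by
    refine Nat.eq_of_mul_eq_mul_left (pow_pos hp.pos (4 * m)) ?_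
    rw [← hF, hcount, hF]
    ring
  rw [hupper] at hlower
  exact absurd hlower (not_le.2 (Nat.pow_lt_pow_right hp.one_lt (by norm_num)))

end ThreeValued

section Places

open IsLocalRing

lemma exists_valuationSubring_charP_residueField (L : Type*) [Field L] [CharZero L] (p : ℕ)
    [Fact p.Prime] : ∃ V : ValuationSubring L, CharP (ResidueField V) p := by
  have hp := (Fact.out : p.Prime)
  let f : ℤ ≃+* (Int.castRingHom L).range := RingEquiv.ofBijective _
    ⟨fun _ _ h => Int.cast_injective (congrArg Subtype.val h),
      (Int.castRingHom L).rangeRestrict_surjective⟩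
  have hproper : Ideal.span {f p} ≠ ⊤ := by
    rw [Ne, Ideal.span_singleton_eq_top, isUnit_map_iff]
    exact (Nat.prime_iff_prime_int.1 hp).not_isUnit
  obtain ⟨V, -, hV⟩ := Ideal.image_subset_nonunits_valuationSubring _ hproper
  have hpV : ((p : V) : L) ∈ V.nonunits :=
    hV ⟨f p, Ideal.mem_span_singleton_self _, by simp [f]⟩
  refine ⟨V, (CharP.charP_iff_prime_eq_zero hp).2 ?_⟩
  rw [← map_natCast (residue V), residue_eq_zero_iff]
  exact V.coe_mem_nonunits_iff.1 hpV

variable (A : Type*) {L : Type*} [CommRing A] [IsIntegrallyClosed A] [Field L] [Algebra A L]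
  [IsFractionRing A L]

lemma isAlgClosed_residueField [IsLocalRing A] [IsAlgClosed L] : IsAlgClosed (ResidueField A) := by
  refine IsAlgClosed.of_exists_root _ fun f hf hirr => ?_
  obtain ⟨g, hgf, hdeg, hg⟩ := Polynomial.lifts_and_degree_eq_and_monic
    ((Polynomial.mem_lifts _).2 (Polynomial.map_surjective _ residue_surjective f)) hf
  obtain ⟨x, hx⟩ := IsAlgClosed.exists_aeval_eq_zero L g
    (hdeg ▸ (Polynomial.degree_pos_of_irreducible hirr).ne')
  obtain ⟨y, rfl⟩ := IsIntegrallyClosed.isIntegral_iff.1 ⟨g, hg, hx⟩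
  refine ⟨residue A y, ?_⟩
  have hy : g.eval y = 0 := by
    rw [Polynomial.aeval_algebraMap_apply] at hx
    exact (FaithfulSMul.algebraMap_eq_zero_iff A L).1 hx
  rw [← hgf, Polynomial.eval_map_apply, hy, map_zero]

lemma exists_isPrimitiveRoot_algebraMap_eq {n : ℕ} (hn : 0 < n) {ξ : L} (hξ : IsPrimitiveRoot ξ n) :
    ∃ ζ : A, IsPrimitiveRoot ζ n ∧ algebraMap A L ζ = ξ := by
  obtain ⟨ζ, rfl⟩ := IsIntegrallyClosed.exists_algebraMap_eq_of_isIntegral_pow (R := A) hn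
    (hξ.pow_eq_one ▸ isIntegral_one)
  exact ⟨ζ, hξ.of_map_of_injective (FaithfulSMul.algebraMap_injective A L), rfl⟩

theorem exists_valuationSubring_isTeichmuller (L : Type*) [Field L] [CharZero L] [IsAlgClosed L]
    (F : Type*) [Field F] [Finite F] (p : ℕ) [Fact p.Prime] [Algebra (ZMod p) F] :
    ∃ (V : ValuationSubring L) (_ : Algebra F (ResidueField V)) (ω : MulChar F V),
      IsTeichmuller ω := by
  have := Fintype.ofFinite F
  obtain ⟨V, hchar⟩ := exists_valuationSubring_charP_residueField L p
  let : Algebra (ZMod p) (ResidueField V) := ZMod.algebra _ p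
  have : IsAlgClosed (ResidueField V) := isAlgClosed_residueField V (L := L)
  let : Algebra F (ResidueField V) :=
    (IsAlgClosed.lift : F →ₐ[ZMod p] ResidueField V).toAlgebra
  have hcard : 0 < Fintype.card F - 1 := Nat.sub_pos_of_lt Fintype.one_lt_card
  have : NeZero ((Fintype.card F - 1 : ℕ) : L) := ⟨Nat.cast_ne_zero.2 hcard.ne'⟩
  obtain ⟨ξ, hξ⟩ := HasEnoughRootsOfUnity.exists_primitiveRoot L (Fintype.card F - 1)
  obtain ⟨ζ, hζ, -⟩ := exists_isPrimitiveRoot_algebraMap_eq V hcard hξ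
  exact ⟨V, inferInstance, exists_isTeichmuller hζ⟩

end Places

section WeilSum

lemma exists_coprime_zpow_eq_pow {F : Type*} [Field F] [Fintype F] {d : ℤ}
    (hF : 2 < Fintype.card F) (hd : Int.gcd d ((Fintype.card F : ℤ) - 1) = 1) :
    ∃ n : ℕ, n ≠ 0 ∧ n.Coprime (Fintype.card F - 1) ∧ ∀ x : F, x ^ d = x ^ n := by
  obtain ⟨N, hN⟩ : ∃ N, Fintype.card F = N + 1 := Nat.exists_eq_add_one.2 Fintype.card_pos
  rw [hN, Nat.cast_succ, add_sub_cancel_right] at hd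
  rw [hN, Nat.add_sub_cancel]
  obtain ⟨n, hn⟩ := Int.eq_ofNat_of_zero_le (Int.emod_nonneg d (b := N) (by omega))
  have hcop : n.Coprime N := by
    rw [Nat.coprime_iff_gcd_eq_one, ← Int.gcd_natCast_natCast, ← hn, Int.gcd_emod, hd]
  have hn0 : n ≠ 0 := by
    rintro rfl
    rw [Nat.coprime_zero_left] at hcop
    omega
  have hd0 : d ≠ 0 := by
    rintro rfl
    exact hn0 (by simpa using hn.symm)
  refine ⟨n, hn0, hcop, fun x => ?_⟩
  obtain rfl | hx := eq_or_ne x 0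
  · rw [zero_zpow d hd0, zero_pow hn0]
  · have hxN : x ^ (N : ℤ) = 1 := by
      simpa [hN] using FiniteField.pow_card_sub_one_eq_one x hx
    rw [← Int.emod_add_mul_ediv d N, zpow_add₀ hx, zpow_mul, hxN, one_zpow, mul_one, hn,
      zpow_natCast]

variable {p : ℕ} [Fact p.Prime] {K : Type} [Field K] [Fintype K] [Algebra (ZMod p) K]

lemma canonicalAddChar_eq_map_traceAddChar {R : Type*} [CommRing R] {ζ : R} (hζ : ζ ^ p = 1)
    (f : R →+* ℂ) (hf : f ζ = Complex.exp (2 * Real.pi * Complex.I / p)) (x : K) :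
    canonicalAddChar p K x = f (traceAddChar K hζ x) := by
  rw [traceAddChar_apply, map_pow, hf, ← Complex.exp_nat_mul, canonicalAddChar]
  congr 1
  ring

lemma weilSum_eq_map_binomialSum {R : Type*} [CommRing R] {ζ : R} (hζ : ζ ^ p = 1)
    (f : R →+* ℂ) (hf : f ζ = Complex.exp (2 * Real.pi * Complex.I / p)) {d : ℤ} {n : ℕ}
    (hn : ∀ x : K, x ^ d = x ^ n) (a : K) :
    weilSum p K d a = f (binomialSum (traceAddChar K hζ) n a) := by
  simp only [weilSum, binomialSum, map_sum, hn, canonicalAddChar_eq_map_traceAddChar hζ f hf]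

lemma finrank_lt_card (p : ℕ) [Fact p.Prime] {F : Type*} [Field F] [Fintype F]
    [Algebra (ZMod p) F] : Module.finrank (ZMod p) F < Fintype.card F := by
  rw [Module.card_eq_pow_finrank (K := ZMod p), ZMod.card]
  exact Nat.lt_pow_self (Fact.out : p.Prime).one_lt

lemma sqrt_card_eq_pow {F : Type*} [Field F] [Fintype F] [Algebra (ZMod p) F] {n : ℕ}
    (hn : Module.finrank (ZMod p) F = 2 * n) : √(Fintype.card F) = (p : ℝ) ^ n := by
  rw [Module.card_eq_pow_finrank (K := ZMod p), ZMod.card, hn, mul_comm, pow_mul, Nat.cast_pow,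
    Nat.cast_pow, Real.sqrt_sq (by positivity)]

end WeilSum

theorem stmt6 (p : ℕ) [Fact p.Prime] (K : Type) [Field K] [Fintype K] [CharP K p]
    [Algebra (ZMod p) K]
    (h4 : 4 ∣ Module.finrank (ZMod p) K)
    (d : ℤ) (hd : Int.gcd d ((Fintype.card K : ℤ) - 1) = 1) :
    weilValues p K d ≠
      {0, (p : ℂ) * (Real.sqrt (Fintype.card K) : ℂ),
        -((p : ℂ) * (Real.sqrt (Fintype.card K) : ℂ))} := by
  intro hval
  have hp := (Fact.out : p.Prime)
  have hK : 2 < Fintype.card K :=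
    (Nat.lt_of_lt_of_le (by norm_num) (Nat.le_of_dvd Module.finrank_pos h4)).trans
      (finrank_lt_card p)
  obtain ⟨m, hm⟩ := h4
  have hsqrt : √(Fintype.card K) = (p : ℝ) ^ (2 * m) := sqrt_card_eq_pow (by rw [hm]; ring)
  obtain ⟨n, hn0, hn, hpow⟩ := exists_coprime_zpow_eq_pow hK hd
  obtain ⟨V, _, ω, hω⟩ := exists_valuationSubring_isTeichmuller ℂ K p
  obtain ⟨ζ, hζ, hζexp⟩ :=
    exists_isPrimitiveRoot_algebraMap_eq V hp.pos (Complex.isPrimitiveRoot_exp p hp.ne_zero)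
  refine hω.not_forall_binomialSum_eq hζ hn0 hn hm fun a ha => ?_
  have hmem : weilSum p K d a ∈ weilValues p K d := ⟨a, ha, rfl⟩
  rw [hval, hsqrt, weilSum_eq_map_binomialSum hζ.pow_eq_one V.subtype hζexp hpow] at hmem
  rcases hmem with h | h | h
  · exact Or.inl (V.subtype_injective (by simp [h]))
  · exact Or.inr (Or.inl (V.subtype_injective (by simp [h, pow_succ'])))
  · exact Or.inr (Or.inr (V.subtype_injective (by simp [Set.mem_singleton_iff.1 h, pow_succ'])))
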